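/- Let A generate a bounded C₀-semigroup on a Hilbert space H with iℝ ⊂ ρ(A). If there exist constants C, p > 0 such that ‖(iλ - A)⁻¹‖ ≤ C|λ|^p for all real λ with |λ| ≥ 1, then there exists M > 0 such that ‖e^{tA}U‖ ≤ M t^{-1/p} ‖U‖_{D(A)} for all U ∈ D(A) and t ≥ 1. -/

import Mathlib

open Filter

open MeasureTheory FourierTransform SchwartzMap
open scoped ContDiff ENNReal

theorem bt_plancherel {H : Type*} [NormedAddCommGroup H] [InnerProductSpace ℂ H] [CompleteSpace H]
    (f : ℝ → H) (hf : Integrable f) (hf2 : MemLp f 2) :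
    eLpNorm (𝓕 f) 2 volume = eLpNorm f 2 volume := by
  set F : Lp H 2 (volume : Measure ℝ) := hf2.toLp f with hF
  have hcont : Continuous (𝓕 f) := VectorFourier.fourierIntegral_continuous Real.continuous_fourierChar (L := innerₗ ℝ) continuous_inner hf
  have key : ∀ᵐ x, (𝓕 f) x = (𝓕 F : Lp H 2 (volume : Measure ℝ)) x := by
    apply ae_eq_of_integral_contDiff_smul_eq
    · exact hcont.locallyIntegrable
    · exact (Lp.memLp (𝓕 F)).locallyIntegrable (by norm_num)
    intro g hg hgs
    have hs : HasCompactSupport (fun x => (g x : ℂ)) := hgs.comp_left (g := fun y : ℝ => (y:ℂ)) (by simp)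
    have hd : ContDiff ℝ ∞ (fun x => (g x : ℂ)) := Complex.ofRealCLM.contDiff.comp hg
    let φ : 𝓢(ℝ, ℂ) := hs.toSchwartzMap hd
    have h1 : ((𝓕 F : Lp H 2 (volume : Measure ℝ)) : 𝓢'(ℝ, H)) φ = (F : 𝓢'(ℝ, H)) (𝓕 φ) := by
      rw [← Lp.fourier_toTemperedDistribution_eq, TemperedDistribution.fourier_apply]
    rw [Lp.toTemperedDistribution_apply, Lp.toTemperedDistribution_apply] at h1
    have h2 : ∫ x, (𝓕 φ) x • F x = ∫ x, (𝓕 φ) x • f x := by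
      apply integral_congr_ae
      filter_upwards [hf2.coeFn_toLp] with x hx
      rw [hF, hx]
    have h3 : ∫ x, (𝓕 (φ : ℝ → ℂ)) x • f x = ∫ x, φ x • (𝓕 f) x := by
      simpa using! VectorFourier.integral_fourierIntegral_smul_eq_flip (L := innerₗ ℝ) Real.continuous_fourierChar
        continuous_inner (φ.integrable (μ := volume)) hf
    rw [h2, SchwartzMap.fourier_coe, h3] at h1
    simpa [φ] using h1.symm
  rw [eLpNorm_congr_ae key, ← eLpNorm_congr_ae hf2.coeFn_toLp]
  have := Lp.norm_fourier_eq F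
  rw [Lp.norm_def, Lp.norm_def] at this
  exact (ENNReal.toReal_eq_toReal_iff' (Lp.eLpNorm_ne_top _) (Lp.eLpNorm_ne_top _)).1 this

section
variable {H : Type*} [NormedAddCommGroup H] [InnerProductSpace ℂ H]

/-- `R` is the inverse of `iλ - A`. -/
def BTIsRes (A : H →ₗ.[ℂ] H) (lam : ℝ) (R : H →L[ℂ] H) : Prop :=
  (∀ u : A.domain, R ((Complex.I * lam) • (u : H) - A u) = u) ∧
  (∀ v : H, ∃ u : A.domain, R v = u ∧ (Complex.I * lam) • (u : H) - A u = v)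

theorem bt_res_norm_le (A : H →ₗ.[ℂ] H) {l m : ℝ} {R S : H →L[ℂ] H}
    (hR : BTIsRes A l R) (hS : BTIsRes A m S) (h : |m - l| * ‖R‖ ≤ 1 / 2) :
    ‖S‖ ≤ 2 * ‖R‖ := by
  apply ContinuousLinearMap.opNorm_le_bound _ (by positivity)
  intro v
  obtain ⟨u, hu, hv⟩ := hS.2 v
  have h1 := hR.1 u
  have h2 : (Complex.I * l) • (u : H) - A u = v - (Complex.I * (m - l : ℝ)) • (u : H) := by
    rw [← hv]; push_cast; module
  rw [h2] at h1
  rw [hu]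
  have h3 : ‖v - (Complex.I * (m - l : ℝ)) • (u : H)‖ ≤ ‖v‖ + |m - l| * ‖(u : H)‖ := by
    refine (norm_sub_le _ _).trans ?_
    rw [norm_smul]; simp [-Complex.ofReal_sub]
  have h4 : ‖(u : H)‖ ≤ ‖R‖ * (‖v‖ + |m - l| * ‖(u : H)‖) := by
    calc ‖(u : H)‖ = ‖R (v - (Complex.I * (m - l : ℝ)) • (u : H))‖ := by rw [h1]
      _ ≤ _ := (R.le_opNorm _).trans (by gcongr)
  nlinarith [norm_nonneg (u : H)]

theorem bt_res_bound (A : H →ₗ.[ℂ] H) (R : ℝ → H →L[ℂ] H) (hR : ∀ l, BTIsRes A l (R l))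
    (C p : ℝ) (hp : 0 < p) (hC : ∀ l : ℝ, 1 ≤ |l| → ‖R l‖ ≤ C * |l| ^ p) :
    ∃ K ≥ (1:ℝ), ∀ l : ℝ, ‖R l‖ ≤ K * (1 + |l|) ^ p := by
  obtain ⟨K, hK⟩ : ∃ K : ℝ, ∀ l ∈ Set.Icc (-1:ℝ) 1, ‖R l‖ ≤ K := by
    refine isCompact_Icc.induction_on (p := fun s => ∃ K : ℝ, ∀ l ∈ s, ‖R l‖ ≤ K) ?_ ?_ ?_ ?_
    · exact ⟨0, by simp⟩
    · rintro s t hst ⟨K, hK⟩; exact ⟨K, fun l hl => hK l (hst hl)⟩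
    · rintro s t ⟨K, hK⟩ ⟨L, hL⟩
      refine ⟨max K L, ?_⟩
      rintro l (hl | hl)
      · exact (hK l hl).trans (le_max_left _ _)
      · exact (hL l hl).trans (le_max_right _ _)
    · intro l _
      have hc : Continuous fun m : ℝ => |m - l| * ‖R l‖ := by fun_prop
      have hm : ∀ᶠ m in nhds l, |m - l| * ‖R l‖ < 1 / 2 := by
        apply (hc.tendsto l).eventually_lt_const; simp
      exact ⟨_, mem_nhdsWithin_of_mem_nhds hm, 2 * ‖R l‖,
        fun m (hm : _ < _) => bt_res_norm_le A (hR l) (hR m) hm.le⟩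
  refine ⟨max 1 (max K C), le_max_left _ _, fun l => ?_⟩
  rcases le_total |l| 1 with h | h
  · refine (hK l (abs_le.1 h)).trans (((le_max_left K C).trans (le_max_right 1 _)).trans ?_)
    apply le_mul_of_one_le_right
    · exact zero_le_one.trans (le_max_left _ _)
    · exact Real.one_le_rpow (by linarith [abs_nonneg l]) hp.le
  · refine (hC l h).trans ?_
    gcongr
    · exact (le_max_right K C).trans (le_max_right _ _)
    · linarith

theorem bt_no_eigen [CompleteSpace H] (T : ℝ → H →L[ℂ] H) (A : H →ₗ.[ℂ] H)
    (M₀ : ℝ) (hbdd : ∀ t ≥ (0:ℝ), ‖T t‖ ≤ M₀) (hT0 : T 0 = 1)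
    (hgen : ∀ u : A.domain, ∀ t ≥ (0:ℝ),
      HasDerivAt (fun s => T s (u : H)) (T t (A u)) t)
    {l : ℝ} {R : H →L[ℂ] H} (hR : BTIsRes A l R) (z : H)
    (hz : ∀ t ≥ (0:ℝ), T t z = Complex.exp (Complex.I * l * t) • z) : z = 0 := by
  set e : ℝ := 1 / (2 * (‖R‖ + 1)) with he
  have hepos : 0 < e := by positivity
  have hR' : ‖(-(e : ℂ)) • R‖ < 1 := by
    rw [norm_smul, norm_neg, Complex.norm_real, Real.norm_of_nonneg hepos.le, he, div_mul_eq_mul_div,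
      div_lt_one (by positivity)]
    linarith [norm_nonneg R]
  let U := Units.oneSub ((-(e : ℂ)) • R) hR'
  let w : H := (↑U⁻¹ : H →L[ℂ] H) z
  have hw : w + (e : ℂ) • R w = z := by
    have := congrArg (fun S : H →L[ℂ] H => S z) U.mul_inv
    simpa [U, w] using this
  obtain ⟨y, hy, hyw⟩ := hR.2 w
  have hAy : A y = (Complex.I * l + e) • (y : H) - z := by
    rw [← hw, hy, ← hyw]; module
  have hec : (e : ℂ) ≠ 0 := by exact_mod_cast hepos.ne'
  let g : ℝ → H := fun s => Complex.exp (-(Complex.I * l + e) * s) • (T s (y : H))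
      - (Complex.exp (-(e : ℂ) * s) * (e : ℂ)⁻¹) • z
  have hexp : ∀ (c : ℂ) (s : ℝ), HasDerivAt (fun s : ℝ => Complex.exp (c * s)) (Complex.exp (c * s) * c) s := by
    intro c s
    have h1 : HasDerivAt (fun s : ℝ => c * (s : ℂ)) c s := by
      simpa using (Complex.ofRealCLM.hasDerivAt (x := s)).const_mul c
    exact h1.cexp
  have hg : ∀ s ≥ (0:ℝ), HasDerivAt g 0 s := by
    intro s hs
    have h1 := (hexp (-(Complex.I * l + e)) s).smul (hgen y s hs)
    have h2 := ((hexp (-(e:ℂ)) s).mul_const (e : ℂ)⁻¹).smul_const z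
    refine (show HasDerivAt g _ s from h1.sub h2).congr_deriv ?_
    rw [hAy, map_sub, map_smul, hz s hs]
    have h3 : Complex.exp (-(e : ℂ) * s)
        = Complex.exp (-(Complex.I * l + e) * s) * Complex.exp (Complex.I * l * s) := by
      rw [← Complex.exp_add]; ring_nf
    rw [h3]
    have h4 : Complex.exp (-(Complex.I * l + e) * s) * Complex.exp (Complex.I * l * s) * -(e : ℂ) * (e : ℂ)⁻¹
        = -(Complex.exp (-(Complex.I * l + e) * s) * Complex.exp (Complex.I * l * s)) := by
      field_simp
    rw [h4]
    module
  have hconst : ∀ b ≥ (0:ℝ), g b = g 0 := by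
    intro b hb
    exact constant_of_has_deriv_right_zero (a := 0) (b := b)
      (fun x hx => (hg x hx.1).continuousAt.continuousWithinAt)
      (fun x hx => (hg x hx.1).hasDerivWithinAt) b ⟨hb, le_rfl⟩
  have hbound : ∀ b ≥ (0:ℝ), ‖g 0‖ ≤ Real.exp (-(e * b)) * (M₀ * ‖(y : H)‖ + e⁻¹ * ‖z‖) := by
    intro b hb
    rw [← hconst b hb]
    refine (norm_sub_le _ _).trans ?_
    rw [norm_smul, norm_smul, norm_mul, Complex.norm_exp, Complex.norm_exp]
    have : ‖T b (y : H)‖ ≤ M₀ * ‖(y : H)‖ := (T b).le_of_opNorm_le (hbdd b hb) _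
    simp [abs_of_pos hepos]
    rw [mul_add, mul_assoc]
    gcongr
  have hg0 : g 0 = 0 := by
    have ht : Tendsto (fun b : ℝ => Real.exp (-(e * b)) * (M₀ * ‖(y : H)‖ + e⁻¹ * ‖z‖)) atTop (nhds 0) := by
      have h1 : Tendsto (fun b : ℝ => Real.exp (-(e * b))) atTop (nhds 0) :=
        Real.tendsto_exp_neg_atTop_nhds_zero.comp (tendsto_id.const_mul_atTop hepos)
      simpa using h1.mul_const (M₀ * ‖(y : H)‖ + e⁻¹ * ‖z‖)
    have : ‖g 0‖ ≤ 0 := ge_of_tendsto ht (eventually_ge_atTop 0 |>.mono hbound)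
    simpa using this
  have hyz : (y : H) = (e : ℂ)⁻¹ • z := by
    simpa [g, hT0, sub_eq_zero] using hg0
  have hz' : z = (e : ℂ) • (y : H) := by rw [hyz, smul_smul, mul_inv_cancel₀ hec, one_smul]
  have hw0 : w = 0 := by
    have := hw
    rw [hy] at this
    rw [← hz'] at this
    simpa using this
  rw [← hw, hw0]; simp

theorem bt_commute [CompleteSpace H] (T : ℝ → H →L[ℂ] H) (A : H →ₗ.[ℂ] H)
    (M₀ : ℝ) (hbdd : ∀ t ≥ (0:ℝ), ‖T t‖ ≤ M₀) (hT0 : T 0 = 1)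
    (hsemi : ∀ s ≥ (0:ℝ), ∀ t ≥ (0:ℝ), T (s + t) = (T s).comp (T t))
    (hgen : ∀ u : A.domain, ∀ t ≥ (0:ℝ),
      HasDerivAt (fun s => T s (u : H)) (T t (A u)) t)
    {l : ℝ} {R : H →L[ℂ] H} (hR : BTIsRes A l R) (u : A.domain) {t : ℝ} (ht : 0 ≤ t) :
    R (T t (A u)) = (Complex.I * l) • R (T t u) - T t u := by
  obtain ⟨y, hy, hyx⟩ := hR.2 ((Complex.I * l) • T t u - T t (A u))
  have hAy : A y = (Complex.I * l) • (y : H) - ((Complex.I * l) • T t u - T t (A u)) := by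
    rw [← hyx]; module
  have hz : T t (u : H) - y = 0 := by
    apply bt_no_eigen T A M₀ hbdd hT0 hgen hR
    intro b hb
    let g : ℝ → H := fun s => Complex.exp (-(Complex.I * l) * s) • (T (s + t) (u : H) - T s (y : H))
    have hexp : ∀ (c : ℂ) (s : ℝ), HasDerivAt (fun s : ℝ => Complex.exp (c * s)) (Complex.exp (c * s) * c) s := by
      intro c s
      have h1 : HasDerivAt (fun s : ℝ => c * (s : ℂ)) c s := by
        simpa using (Complex.ofRealCLM.hasDerivAt (x := s)).const_mul c
      exact h1.cexp
    have hg : ∀ s ≥ (0:ℝ), HasDerivAt g 0 s := by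
      intro s hs
      have h0 : HasDerivAt (fun s => T (s + t) (u : H)) (T (s + t) (A u)) s :=
        (hgen u (s + t) (by linarith)).comp_add_const s t
      have h1 := (hexp (-(Complex.I * l)) s).smul (h0.sub (hgen y s hs))
      refine (show HasDerivAt g _ s from h1).congr_deriv ?_
      rw [hAy, hsemi s hs t ht]
      simp only [map_sub, map_smul, ContinuousLinearMap.comp_apply, Pi.sub_apply]
      rw [hsemi s hs t ht, ContinuousLinearMap.comp_apply]
      module
    have hconst : g b = g 0 :=
      constant_of_has_deriv_right_zero (a := 0) (b := b)
        (fun x hx => (hg x hx.1).continuousAt.continuousWithinAt)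
        (fun x hx => (hg x hx.1).hasDerivWithinAt) b ⟨hb, le_rfl⟩
    have h2 := congrArg (fun x => Complex.exp (Complex.I * l * b) • x) hconst
    simp only [g, smul_smul, ← Complex.exp_add, hsemi b hb t ht, hT0] at h2
    simpa using h2
  rw [← hy, sub_eq_zero, map_sub, map_smul] at hz
  rw [eq_sub_iff_add_eq] at hz ⊢
  rw [add_comm]
  exact hz

end

theorem bt_cutoff : ∃ ψ : ℕ → ℝ → ℝ, (∀ k x, HasDerivAt (ψ k) (ψ (k + 1) x) x) ∧
    (∀ k x, x ∉ Set.Icc (1 / 4 : ℝ) (3 / 4) → ψ k x = 0) ∧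
    (∀ k, ∃ B, ∀ x, |ψ k x| ≤ B) ∧ (∀ x ∈ Set.Icc (3 / 8 : ℝ) (5 / 8), ψ 0 x = 1) := by
  let b : ContDiffBump (1 / 2 : ℝ) := ⟨1 / 8, 1 / 4, by norm_num, by norm_num⟩
  have hb : ContDiff ℝ ∞ (b : ℝ → ℝ) := b.contDiff
  have hsupp : ∀ k, Function.support (iteratedDeriv k (b : ℝ → ℝ)) ⊆ tsupport (b : ℝ → ℝ) := by
    intro k
    induction k with
    | zero => simpa using subset_tsupport _
    | succ k ih =>
      rw [iteratedDeriv_succ]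
      exact (support_deriv_subset).trans (closure_minimal ih (isClosed_tsupport _))
  refine ⟨fun k => iteratedDeriv k (b : ℝ → ℝ), ?_, ?_, ?_, ?_⟩
  · intro k x
    show HasDerivAt (iteratedDeriv k (b : ℝ → ℝ)) (iteratedDeriv (k + 1) (b : ℝ → ℝ) x) x
    rw [iteratedDeriv_succ]
    have : Differentiable ℝ (iteratedDeriv k (b : ℝ → ℝ)) :=
      hb.differentiable_iteratedDeriv k (by exact_mod_cast WithTop.coe_lt_top _)
    exact (this x).hasDerivAt
  · intro k x hx
    by_contra h
    apply hx
    have := hsupp k h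
    rw [b.tsupport_eq, Real.closedBall_eq_Icc] at this
    norm_num [b] at this
    exact this
  · intro k
    have hc : Continuous (iteratedDeriv k (b : ℝ → ℝ)) :=
      hb.continuous_iteratedDeriv k (by exact_mod_cast le_top)
    have hs : HasCompactSupport (iteratedDeriv k (b : ℝ → ℝ)) :=
      b.hasCompactSupport.mono' (hsupp k)
    obtain ⟨B, hB⟩ := hc.bounded_above_of_compact_support hs
    exact ⟨B, hB⟩
  · intro x hx
    simp only [iteratedDeriv_zero]
    apply b.one_of_mem_closedBall
    rw [Real.closedBall_eq_Icc]
    norm_num [b]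
    exact hx

section
variable {H : Type*} [NormedAddCommGroup H] [InnerProductSpace ℂ H]

theorem bt_L2 {f : ℝ → H} {c t : ℝ} (ht : 0 ≤ t) (hc : 0 ≤ c)
    (hm : AEStronglyMeasurable f volume) (hb : ∀ s, ‖f s‖ ≤ c)
    (hs : ∀ s, s ∉ Set.Icc 0 t → f s = 0) :
    Integrable f ∧ MemLp f 2 ∧ eLpNorm f 2 volume ≤ ENNReal.ofReal (c * t ^ (1 / 2 : ℝ)) := by
  have hle : ∀ s, ‖f s‖ ≤ ‖(Set.Icc 0 t).indicator (fun _ => c) s‖ := by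
    intro s
    by_cases h : s ∈ Set.Icc 0 t
    · rw [Set.indicator_of_mem h]; exact (hb s).trans (le_abs_self _)
    · rw [hs s h]; simp
  have hvol : volume (Set.Icc 0 t) ≠ ⊤ := by simp
  have hind : ∀ q, MemLp ((Set.Icc 0 t).indicator (fun _ => c)) q (volume : Measure ℝ) :=
    fun q => memLp_indicator_const q measurableSet_Icc c (Or.inr hvol)
  refine ⟨?_, (hind 2).mono hm (ae_of_all _ hle), ?_⟩
  · exact memLp_one_iff_integrable.1 ((hind 1).mono hm (ae_of_all _ hle))
  · refine (eLpNorm_mono hle).trans ?_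
    rw [eLpNorm_indicator_const measurableSet_Icc (by norm_num) (by norm_num)]
    simp only [Real.volume_Icc, sub_zero]
    rw [ENNReal.ofReal_mul hc, ENNReal.ofReal_rpow_of_nonneg ht (by norm_num), Real.enorm_of_nonneg hc]
    simp

theorem bt_fourier_clm [CompleteSpace H] {f : ℝ → H} (hf : Integrable f) (R : H →L[ℂ] H) (x : ℝ) :
    𝓕 (fun s => R (f s)) x = R (𝓕 f x) := by
  rw [Real.fourier_eq, Real.fourier_eq, ← R.integral_comp_comm]
  · congr 1; ext v
    simp only [Circle.smul_def, map_smul]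
  · exact (Real.fourierIntegral_convergent_iff x).2 hf

theorem bt_fourier_add {f g : ℝ → H} (hf : Integrable f) (hg : Integrable g) (x : ℝ) :
    𝓕 (fun s => f s + g s) x = 𝓕 f x + 𝓕 g x := by
  rw [Real.fourier_eq, Real.fourier_eq, Real.fourier_eq, ← integral_add]
  · simp only [smul_add]
  · exact (Real.fourierIntegral_convergent_iff x).2 hf
  · exact (Real.fourierIntegral_convergent_iff x).2 hg

theorem bt_fourier_smul (f : ℝ → H) (c : ℂ) (x : ℝ) :
    𝓕 (fun s => c • f s) x = c • 𝓕 f x := by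
  rw [Real.fourier_eq, Real.fourier_eq, ← integral_smul]
  congr 1; ext v
  rw [smul_comm]

theorem bt_real {a0 ak S K L t p : ℝ} {k : ℕ} (hK : 1 ≤ K) (hL : 1 ≤ L) (ht : 1 ≤ t) (hp : 0 < p)
    (hk : 1 ≤ p * k) (ha0 : 0 ≤ a0) (h0 : L * a0 ≤ S) (h1 : L * ak ≤ S)
    (h : a0 ≤ (K * L ^ p / t) ^ k * ak) : a0 ≤ K ^ k * t ^ (-(1 / p)) * S := by
  have hL0 : 0 < L := by linarith
  have ht0 : 0 < t := by linarith
  have hS : 0 ≤ S := le_trans (by positivity) h0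
  rcases le_total (L ^ p) t with hc | hc
  · have e1 : (K * L ^ p / t) ^ k * ak ≤ (K * L ^ p / t) ^ k * (L⁻¹ * S) := by
      gcongr
      rw [inv_mul_eq_div, le_div_iff₀ hL0]; linarith
    refine h.trans (e1.trans ?_)
    have e2 : (K * L ^ p / t) ^ k * (L⁻¹ * S) = K ^ k * ((L ^ p / t) ^ k * L⁻¹) * S := by
      rw [mul_div_assoc, mul_pow]; ring
    rw [e2]
    gcongr
    -- (L^p/t)^k ≤ (L^p/t)^(1/p)
    have e3 : (L ^ p / t) ^ k ≤ (L ^ p / t) ^ (1 / p) := by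
      rw [← Real.rpow_natCast]
      apply Real.rpow_le_rpow_of_exponent_ge (by positivity)
      · rw [div_le_one ht0]; exact hc
      · rw [div_le_iff₀ hp]; linarith
    have e4 : (L ^ p / t) ^ (1 / p) = L * t ^ (-(1 / p)) := by
      rw [Real.div_rpow (by positivity) ht0.le, ← Real.rpow_mul hL0.le, mul_one_div_cancel hp.ne',
        Real.rpow_one, Real.rpow_neg ht0.le]; rfl
    calc (L ^ p / t) ^ k * L⁻¹ ≤ (L * t ^ (-(1 / p))) * L⁻¹ := by rw [← e4]; gcongr
      _ = t ^ (-(1 / p)) := by field_simp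
  · have e1 : t ^ (1 / p) ≤ L := by
      calc t ^ (1 / p) ≤ (L ^ p) ^ (1 / p) := by gcongr
        _ = L := by rw [← Real.rpow_mul hL0.le, mul_one_div_cancel hp.ne', Real.rpow_one]
    have e2 : t ^ (1 / p) * a0 ≤ S := le_trans (by gcongr) h0
    have e3 : a0 ≤ t ^ (-(1 / p)) * S := by
      rw [Real.rpow_neg ht0.le, inv_mul_eq_div, le_div_iff₀ (by positivity)]; linarith
    refine e3.trans ?_
    have : (1:ℝ) ≤ K ^ k := one_le_pow₀ hK
    have h5 : 0 ≤ t ^ (-(1 / p)) * S := by positivity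
    nlinarith

end

/-- Borichev–Tomilov: if A generates a bounded C₀-semigroup T on a Hilbert space,
iℝ ⊂ ρ(A), and ‖(iλ - A)⁻¹‖ ≤ C|λ|^p for |λ| ≥ 1, then the semigroup decays
polynomially: ‖T(t)u‖ ≤ M t^{-1/p}(‖u‖ + ‖Au‖) for u ∈ D(A) and t ≥ 1. -/
theorem stmt15 {H : Type*} [NormedAddCommGroup H] [InnerProductSpace ℂ H] [CompleteSpace H]
    (T : ℝ → H →L[ℂ] H) (A : H →ₗ.[ℂ] H)
    (M₀ : ℝ) (hbdd : ∀ t ≥ (0:ℝ), ‖T t‖ ≤ M₀)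
    (hT0 : T 0 = 1)
    (hsemi : ∀ s ≥ (0:ℝ), ∀ t ≥ (0:ℝ), T (s + t) = (T s).comp (T t))
    (hgen : ∀ u : A.domain, ∀ t ≥ (0:ℝ),
      HasDerivAt (fun s => T s (u : H)) (T t (A u)) t)
    (C p : ℝ) (hC : 0 < C) (hp : 0 < p)
    (hres : ∀ lam : ℝ, ∃ R : H →L[ℂ] H,
      (∀ u : A.domain, R ((Complex.I * lam) • (u : H) - A u) = u) ∧
      (∀ v : H, ∃ u : A.domain, R v = u ∧ (Complex.I * lam) • (u : H) - A u = v) ∧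
      (1 ≤ |lam| → ‖R‖ ≤ C * |lam| ^ p)) :
    ∃ M > (0:ℝ), ∀ u : A.domain, ∀ t ≥ (1:ℝ),
      ‖T t (u : H)‖ ≤ M * t ^ (-(1 / p)) * (‖(u : H)‖ + ‖A u‖) := by
  have hM0 : 0 ≤ M₀ := (norm_nonneg _).trans (hbdd 0 le_rfl)
  choose R hR1 hR2 hR3 using hres
  have hR : ∀ l, BTIsRes A l (R l) := fun l => ⟨hR1 l, hR2 l⟩
  obtain ⟨K, hK1, hK⟩ := bt_res_bound A R hR C p hp hR3
  obtain ⟨ψ, hψd, hψs, hψb, hψ1⟩ := bt_cutoff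
  choose B0 hB0 using hψb
  obtain ⟨k, hk⟩ : ∃ k : ℕ, 1 ≤ p * k := by
    obtain ⟨k, hk⟩ := exists_nat_ge (1 / p)
    refine ⟨k, ?_⟩
    rw [div_le_iff₀ hp] at hk; linarith
  have hB0' : ∀ j, 0 ≤ B0 j := fun j => (abs_nonneg _).trans (hB0 j 0)
  set B : ℝ := B0 0 + B0 1 + B0 k + B0 (k + 1) with hB
  have hBnn : 0 ≤ B := by have := hB0'; rw [hB]; linarith [this 0, this 1, this k, this (k + 1)]
  refine ⟨(M₀ + 1) * 2 * (6 * K ^ k * B * M₀ + 1), by positivity, ?_⟩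
  intro u t ht
  have ht0 : 0 < t := by linarith
  set N : ℝ := ‖(u : H)‖ + ‖A u‖ with hN
  have hNnn : 0 ≤ N := by positivity
  -- the localized orbits
  let F : ℕ → ℝ → H := fun j s => ψ j (s / t) • T s (u : H)
  let G : ℕ → ℝ → H := fun j s => ψ j (s / t) • T s (A u)
  have hzero : ∀ j s, s < t / 4 → ψ j (s / t) = 0 := by
    intro j s hs
    apply hψs
    intro h
    have := h.1
    rw [le_div_iff₀ ht0] at this
    linarith
  have hsupp : ∀ j s, s ∉ Set.Icc 0 t → ψ j (s / t) = 0 := by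
    intro j s hs
    apply hψs
    rintro ⟨h1, h2⟩
    rw [le_div_iff₀ ht0] at h1
    rw [div_le_iff₀ ht0] at h2
    exact hs ⟨by linarith, by linarith⟩
  have hFd : ∀ j s, HasDerivAt (F j) ((t⁻¹ : ℂ) • F (j + 1) s + G j s) s := by
    intro j s
    rcases lt_or_ge s (t / 4) with h | h
    · have e : F j =ᶠ[nhds s] fun _ => (0 : H) := by
        filter_upwards [Iio_mem_nhds h] with r hr
        simp [F, hzero j r hr]
      have e2 : (t⁻¹ : ℂ) • F (j + 1) s + G j s = 0 := by
        simp [F, G, hzero _ s h]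
      rw [e2]
      exact (hasDerivAt_const s (0 : H)).congr_of_eventuallyEq e
    · have h1 : HasDerivAt (fun s => ψ j (s / t)) (ψ (j + 1) (s / t) * (1 / t)) s :=
        (hψd j (s / t)).comp s ((hasDerivAt_id s).div_const t)
      have h2 := h1.smul (hgen u s (by linarith))
      refine (show HasDerivAt (F j) _ s from h2).congr_deriv ?_
      have e3 : (t⁻¹ : ℂ) • F (j + 1) s = (t⁻¹ : ℝ) • F (j + 1) s := by
        rw [← Complex.ofReal_inv, Complex.coe_smul]
      rw [e3]
      simp only [F, G, smul_smul, one_div]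
      rw [add_comm, mul_comm]
  have hbound : ∀ j s (x : H), ‖ψ j (s / t) • T s x‖ ≤ B0 j * (M₀ * ‖x‖) := by
    intro j s x
    by_cases h : s ∈ Set.Icc 0 t
    · rw [norm_smul]
      exact mul_le_mul (hB0 j _) ((T s).le_of_opNorm_le (hbdd s h.1) _) (norm_nonneg _) (hB0' j)
    · rw [hsupp j s h, zero_smul, norm_zero]
      have := hB0' j
      positivity
  have hFc : ∀ j, Continuous (F j) := fun j =>
    continuous_iff_continuousAt.2 fun s => (hFd j s).continuousAt
  have hFL : ∀ j, Integrable (F j) ∧ MemLp (F j) 2 ∧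
      eLpNorm (F j) 2 volume ≤ ENNReal.ofReal (B0 j * (M₀ * ‖(u : H)‖) * t ^ (1 / 2 : ℝ)) := by
    intro j
    have := hB0' j
    refine bt_L2 ht0.le (by positivity) (hFc j).aestronglyMeasurable (fun s => hbound j s _) ?_
    intro s hs
    simp [F, hsupp j s hs]
  have hGm : ∀ j, AEStronglyMeasurable (G j) volume := by
    intro j
    have e : G j = fun s => deriv (F j) s - (t⁻¹ : ℂ) • F (j + 1) s := by
      ext s; rw [(hFd j s).deriv]; abel
    rw [e]
    exact (aestronglyMeasurable_deriv _ _).sub ((hFc (j + 1)).aestronglyMeasurable.const_smul _)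
  have hGL : ∀ j, Integrable (G j) ∧ MemLp (G j) 2 ∧
      eLpNorm (G j) 2 volume ≤ ENNReal.ofReal (B0 j * (M₀ * ‖A u‖) * t ^ (1 / 2 : ℝ)) := by
    intro j
    have := hB0' j
    refine bt_L2 ht0.le (by positivity) (hGm j) (fun s => hbound j s _) ?_
    intro s hs
    simp [G, hsupp j s hs]
  -- the Fourier identities
  have hid1 : ∀ j (x : ℝ), (Complex.I * (2 * Real.pi * x : ℝ)) • 𝓕 (F j) x
      = (t⁻¹ : ℂ) • 𝓕 (F (j + 1)) x + 𝓕 (G j) x := by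
    intro j x
    have e : deriv (F j) = fun s => (t⁻¹ : ℂ) • F (j + 1) s + G j s := by
      ext s; exact (hFd j s).deriv
    have hi : Integrable (fun s => (t⁻¹ : ℂ) • F (j + 1) s) := (hFL (j + 1)).1.smul _
    have h1 := congrFun (Real.fourier_deriv (hFL j).1 (fun s => (hFd j s).differentiableAt)
      (by rw [e]; exact hi.add (hGL j).1)) x
    rw [e, bt_fourier_add hi (hGL j).1, bt_fourier_smul] at h1
    rw [h1]
    congr 1
    push_cast; ring
  have hid2 : ∀ j (x : ℝ), 𝓕 (F j) x = (t⁻¹ : ℂ) • R (2 * Real.pi * x) (𝓕 (F (j + 1)) x) := by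
    intro j x
    set l : ℝ := 2 * Real.pi * x with hl
    have h1 := congrArg (R l) (hid1 j x)
    rw [← hl, map_smul, map_add, map_smul, ← bt_fourier_clm (hGL j).1] at h1
    have e : (fun s => R l (G j s)) = fun s => R l ((Complex.I * l) • F j s) + (-1 : ℂ) • F j s := by
      ext s
      by_cases h : s ∈ Set.Icc 0 t
      · have := bt_commute T A M₀ hbdd hT0 hsemi hgen (hR l) u h.1
        simp only [F, G]
        rw [ContinuousLinearMap.map_smul_of_tower, this, map_smul,
          ContinuousLinearMap.map_smul_of_tower, smul_sub, smul_comm (ψ j (s / t))]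
        module
      · simp [F, G, hsupp j s h]
    have hi : Integrable (fun s => (Complex.I * l) • F j s) := (hFL j).1.smul _
    have hi2 : Integrable (fun s => (-1 : ℂ) • F j s) := (hFL j).1.smul _
    rw [e, bt_fourier_add ((R l).integrable_comp hi) hi2, bt_fourier_clm hi, bt_fourier_smul,
      bt_fourier_smul, map_smul] at h1
    have h2 : (0 : H) = (t⁻¹ : ℂ) • R l (𝓕 (F (j + 1)) x) + (-1 : ℂ) • 𝓕 (F j) x := by
      have h3 := congrArg (fun y => y - (Complex.I * l) • R l (𝓕 (F j) x)) h1
      simp only [sub_self] at h3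
      rw [h3]; abel
    rw [neg_one_smul, ← sub_eq_add_neg] at h2
    exact (sub_eq_zero.1 h2.symm).symm
  have htn : ‖(t⁻¹ : ℂ)‖ = t⁻¹ := by simp [abs_of_pos ht0]
  have hit : ∀ (x : ℝ) (j : ℕ), ‖𝓕 (F 0) x‖
      ≤ (K * (1 + |2 * Real.pi * x|) ^ p / t) ^ j * ‖𝓕 (F j) x‖ := by
    intro x j
    induction j with
    | zero => simp
    | succ j ih =>
      refine ih.trans ?_
      rw [pow_succ, mul_assoc (_ ^ j)]
      refine mul_le_mul_of_nonneg_left ?_ (by positivity)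
      rw [hid2 j x, norm_smul, htn, div_mul_eq_mul_div, inv_mul_eq_div]
      gcongr
      exact (R _).le_of_opNorm_le (hK _) _
  have hL1 : ∀ j (x : ℝ), (1 + |2 * Real.pi * x|) * ‖𝓕 (F j) x‖
      ≤ ‖𝓕 (F j) x‖ + ‖𝓕 (F (j + 1)) x‖ + ‖𝓕 (G j) x‖ := by
    intro j x
    have h1 := congrArg norm (hid1 j x)
    rw [norm_smul, norm_mul, Complex.norm_I, one_mul, Complex.norm_real, Real.norm_eq_abs] at h1
    have h2 := norm_add_le ((t⁻¹ : ℂ) • 𝓕 (F (j + 1)) x) (𝓕 (G j) x)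
    rw [norm_smul, htn] at h2
    have h3 : t⁻¹ * ‖𝓕 (F (j + 1)) x‖ ≤ ‖𝓕 (F (j + 1)) x‖ :=
      mul_le_of_le_one_left (norm_nonneg _) (inv_le_one_of_one_le₀ ht)
    rw [add_mul, one_mul, h1]
    linarith
  let S : ℝ → ℝ := fun x => ‖𝓕 (F 0) x‖ + ‖𝓕 (F 1) x‖ + ‖𝓕 (G 0) x‖ + ‖𝓕 (F k) x‖
    + ‖𝓕 (F (k + 1)) x‖ + ‖𝓕 (G k) x‖
  have hpt : ∀ x, ‖𝓕 (F 0) x‖ ≤ K ^ k * t ^ (-(1 / p)) * S x := by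
    intro x
    have hn : ∀ f : ℝ → H, 0 ≤ ‖𝓕 f x‖ := fun f => norm_nonneg _
    refine bt_real hK1 (by linarith [abs_nonneg (2 * Real.pi * x)]) ht hp hk (hn _) ?_ ?_ (hit x k)
    · refine (hL1 0 x).trans ?_
      simp only [S, zero_add]
      linarith [hn (F k), hn (F (k + 1)), hn (G k)]
    · refine (hL1 k x).trans ?_
      simp only [S]
      linarith [hn (F 0), hn (F 1), hn (G 0)]
  -- L2 norms
  set c : ℝ≥0∞ := ENNReal.ofReal (B * M₀ * N * t ^ (1 / 2 : ℝ)) with hc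
  have hcb : ∀ j (y : ℝ), B0 j ≤ B → 0 ≤ y → y ≤ N →
      ENNReal.ofReal (B0 j * (M₀ * y) * t ^ (1 / 2 : ℝ)) ≤ c := by
    intro j y hj hy hyN
    apply ENNReal.ofReal_le_ofReal
    rw [mul_assoc B]
    gcongr
  have huN : ‖(u : H)‖ ≤ N := by rw [hN]; linarith [norm_nonneg (A u)]
  have hAuN : ‖A u‖ ≤ N := by rw [hN]; linarith [norm_nonneg (u : H)]
  have hFn : ∀ j, B0 j ≤ B → eLpNorm (fun x => ‖𝓕 (F j) x‖) 2 volume ≤ c := by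
    intro j hj
    rw [eLpNorm_norm, bt_plancherel _ (hFL j).1 (hFL j).2.1]
    exact (hFL j).2.2.trans (hcb j _ hj (norm_nonneg _) huN)
  have hGn : ∀ j, B0 j ≤ B → eLpNorm (fun x => ‖𝓕 (G j) x‖) 2 volume ≤ c := by
    intro j hj
    rw [eLpNorm_norm, bt_plancherel _ (hGL j).1 (hGL j).2.1]
    exact (hGL j).2.2.trans (hcb j _ hj (norm_nonneg _) hAuN)
  have b0 : B0 0 ≤ B := by rw [hB]; linarith [hB0' 0, hB0' 1, hB0' k, hB0' (k + 1)]
  have b1 : B0 1 ≤ B := by rw [hB]; linarith [hB0' 0, hB0' 1, hB0' k, hB0' (k + 1)]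
  have bk : B0 k ≤ B := by rw [hB]; linarith [hB0' 0, hB0' 1, hB0' k, hB0' (k + 1)]
  have bk1 : B0 (k + 1) ≤ B := by rw [hB]; linarith [hB0' 0, hB0' 1, hB0' k, hB0' (k + 1)]
  have hmeas : ∀ f : ℝ → H, Integrable f → AEStronglyMeasurable (fun x => ‖𝓕 f x‖) volume := by
    intro f hf
    have hcont : Continuous (𝓕 f) := VectorFourier.fourierIntegral_continuous
      Real.continuous_fourierChar (L := innerₗ ℝ) continuous_inner hf
    exact hcont.norm.aestronglyMeasurable
  have m0 := hmeas _ (hFL 0).1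
  have m1 := hmeas _ (hFL 1).1
  have m2 := hmeas _ (hGL 0).1
  have m3 := hmeas _ (hFL k).1
  have m4 := hmeas _ (hFL (k + 1)).1
  have m5 := hmeas _ (hGL k).1
  have hS : eLpNorm S 2 volume ≤ c + c + c + c + c + c := by
    have h12 : (1 : ℝ≥0∞) ≤ 2 := by norm_num
    refine (eLpNorm_add_le ((((m0.add m1).add m2).add m3).add m4) m5 h12).trans ?_
    refine add_le_add ?_ (hGn k bk)
    refine (eLpNorm_add_le (((m0.add m1).add m2).add m3) m4 h12).trans ?_
    refine add_le_add ?_ (hFn (k + 1) bk1)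
    refine (eLpNorm_add_le ((m0.add m1).add m2) m3 h12).trans ?_
    refine add_le_add ?_ (hFn k bk)
    refine (eLpNorm_add_le (m0.add m1) m2 h12).trans ?_
    refine add_le_add ?_ (hGn 0 b0)
    refine (eLpNorm_add_le m0 m1 h12).trans ?_
    exact add_le_add (hFn 0 b0) (hFn 1 b1)
  have hDnn : 0 ≤ K ^ k * t ^ (-(1 / p)) := by positivity
  have hup : eLpNorm (F 0) 2 volume
      ≤ ENNReal.ofReal (K ^ k * t ^ (-(1 / p)) * (6 * (B * M₀ * N * t ^ (1 / 2 : ℝ)))) := by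
    rw [← bt_plancherel _ (hFL 0).1 (hFL 0).2.1, ENNReal.ofReal_mul hDnn]
    refine (eLpNorm_le_mul_eLpNorm_of_ae_le_mul (g := S) (c := K ^ k * t ^ (-(1 / p)))
      (ae_of_all _ fun x => (hpt x).trans ?_) 2).trans ?_
    · gcongr; exact le_abs_self _
    · gcongr
      refine hS.trans (le_of_eq ?_)
      rw [ENNReal.ofReal_mul (by norm_num), ← hc]
      norm_num
      ring
  -- lower bound
  have hlow : ENNReal.ofReal (‖T t (u : H)‖ / (M₀ + 1) * (t / 4) ^ (1 / 2 : ℝ))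
      ≤ eLpNorm (F 0) 2 volume := by
    have hle : ∀ s, ‖(Set.Icc (3 / 8 * t) (5 / 8 * t)).indicator
        (fun _ => ‖T t (u : H)‖ / (M₀ + 1)) s‖ ≤ ‖F 0 s‖ := by
      intro s
      by_cases h : s ∈ Set.Icc (3 / 8 * t) (5 / 8 * t)
      · have hs0 : 0 ≤ s := le_trans (by positivity) h.1
        have hst : 0 ≤ t - s := by linarith [h.2]
        rw [Set.indicator_of_mem h, Real.norm_of_nonneg (by positivity), div_le_iff₀ (by positivity)]
        simp only [F]
        rw [hψ1 (s / t) ⟨by rw [le_div_iff₀ ht0]; exact h.1, by rw [div_le_iff₀ ht0]; exact h.2⟩,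
          one_smul]
        have e : T t = (T (t - s)).comp (T s) := by rw [← hsemi _ hst _ hs0]; simp
        rw [e, ContinuousLinearMap.comp_apply]
        refine ((T (t - s)).le_of_opNorm_le (hbdd _ hst) _).trans ?_
        rw [mul_comm]
        gcongr
        linarith
      · rw [Set.indicator_of_notMem h]; simp
    refine le_trans (le_of_eq ?_) (eLpNorm_mono hle)
    rw [eLpNorm_indicator_const measurableSet_Icc (by norm_num) (by norm_num), Real.volume_Icc,
      ENNReal.ofReal_mul (by positivity), Real.enorm_of_nonneg (by positivity),
      show 5 / 8 * t - 3 / 8 * t = t / 4 by ring,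
      ← ENNReal.ofReal_rpow_of_nonneg (by positivity) (by norm_num)]
    simp
  have hfin := (ENNReal.ofReal_le_ofReal_iff (by positivity)).1 (hlow.trans hup)
  have h4 : (t / 4) ^ (1 / 2 : ℝ) = t ^ (1 / 2 : ℝ) / 2 := by
    rw [Real.div_rpow ht0.le (by norm_num), ← Real.sqrt_eq_rpow 4,
      show (4 : ℝ) = 2 ^ 2 by norm_num, Real.sqrt_sq (by norm_num)]
  rw [h4] at hfin
  set q : ℝ := t ^ (1 / 2 : ℝ) with hq
  have hqpos : 0 < q := by positivity
  set r : ℝ := t ^ (-(1 / p)) with hr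
  have hrpos : 0 < r := by positivity
  have h5 : ‖T t (u : H)‖ / (M₀ + 1) ≤ 2 * (K ^ k * r * (6 * (B * M₀ * N))) := by
    have h6 : ‖T t (u : H)‖ / (M₀ + 1) * q ≤ (2 * (K ^ k * r * (6 * (B * M₀ * N)))) * q := by
      linarith
    exact le_of_mul_le_mul_right h6 hqpos
  rw [div_le_iff₀ (by positivity)] at h5
  have h7 : 0 ≤ (M₀ + 1) * 2 * r * N := by positivity
  calc ‖T t (u : H)‖ ≤ _ := h5
    _ = (M₀ + 1) * 2 * (6 * K ^ k * B * M₀) * r * N := by ring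
    _ ≤ (M₀ + 1) * 2 * (6 * K ^ k * B * M₀ + 1) * r * N := by linarith
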